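/- arXiv:2501.06065 — 4 statements merged into one kernel-verified Lean document; each statement's English description precedes it below -/
import Mathlib

section
/- Let x : ℕ → ℝ be defined by x₀ = 1/2 and x_k = 3x_{k-1}(1 - x_{k-1}) for k ≥ 1. Then the limit C_o = lim_{k→∞} k^{3/2}·[(x_{2k+1} - 2/3) - (1/(6·k^{1/2}) - 1/(24k) - (11/192)·ln(k)/k^{3/2})] exists as a real number, and the limit C_e = lim_{k→∞} k^{3/2}·[(2/3 - x_{2k}) - (1/(6·k^{1/2}) + 1/(24k) - (11/192)·ln(k)/k^{3/2})] exists as a real number. -/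
open Filter Topology

/-!
The deviation `e k = 2/3 - x (2 * k)` of the even iterates satisfies the parabolic recursion
`e (k + 1) = e k - 18 * e k ^ 3 + 27 * e k ^ 4`. In the coordinate `s = 1 / e` the function
`V s = s ^ 2 + 3 * s - 99/2 * log s` increases by `36 + O(e ^ 3)` at each step. Its leading term
forces `e k ~ 1 / (6 * √k)`, so the errors are summable and `V (1 / e k) = 36 * k + C + o(1)`.
Inverting this relation up to `o(k ^ (-3/2))` gives the even expansion, and
`x (2 * k + 1) - 2/3 = e k - 3 * e k ^ 2` gives the odd one.
-/

open Asymptotics Set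

section Taylor

variable {α : Type*} {l : Filter α}

lemma isBigO_log_one_sub_add_self {t : α → ℝ} (ht : Tendsto t l (𝓝 0)) :
    (fun i => Real.log (1 - t i) + t i) =O[l] fun i => t i ^ 2 := by
  refine IsBigO.of_bound 2 ?_
  filter_upwards [ht.norm.eventually_le_const (u := 1 / 2) (by norm_num)] with i hi
  have h := Real.abs_log_sub_add_sum_range_le (x := t i) (hi.trans_lt (by norm_num)) 1
  simp only [Finset.sum_range_one, Nat.cast_zero, zero_add, pow_one, div_one,
    one_add_one_eq_two] at h
  calc ‖Real.log (1 - t i) + t i‖ ≤ |t i| ^ 2 / (1 - |t i|) := by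
        rwa [add_comm]
    _ ≤ |t i| ^ 2 / (1 / 2) := by
        rw [Real.norm_eq_abs] at hi
        gcongr
        linarith
    _ = 2 * ‖t i ^ 2‖ := by
        rw [norm_pow, Real.norm_eq_abs]
        ring

variable {𝕜 : Type*} [NormedField 𝕜] {t : α → 𝕜}

lemma isBigO_inv_one_sub_one (ht : Tendsto t l (𝓝 0)) :
    (fun i => (1 - t i)⁻¹) =O[l] fun _ => (1 : 𝕜) :=
  ((ht.const_sub 1).inv₀ (by simp)).isBigO_one 𝕜

lemma isBigO_inv_one_sub_sub (ht : Tendsto t l (𝓝 0)) :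
    (fun i => (1 - t i)⁻¹ - 1 - t i) =O[l] fun i => t i ^ 2 := by
  have h : (fun i => t i ^ 2 * (1 - t i)⁻¹) =O[l] fun i => t i ^ 2 := by
    simpa only [mul_one] using (isBigO_refl (fun i => t i ^ 2) l).mul (isBigO_inv_one_sub_one ht)
  refine h.congr' ?_ .rfl
  filter_upwards [(ht.const_sub 1).eventually_ne (b₂ := 0) (by simp)] with i hi
  field_simp
  ring

lemma isBigO_inv_one_sub_sq_sub (ht : Tendsto t l (𝓝 0)) :
    (fun i => (1 - t i)⁻¹ ^ 2 - 1 - 2 * t i - 3 * t i ^ 2) =O[l] fun i => t i ^ 3 := by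
  have h : (fun i => t i ^ 3 * ((4 - 3 * t i) * (1 - t i)⁻¹ ^ 2)) =O[l] fun i => t i ^ 3 := by
    simpa only [mul_one, one_pow] using (isBigO_refl (fun i => t i ^ 3) l).mul
      ((((ht.const_mul 3).const_sub 4).isBigO_one 𝕜).mul ((isBigO_inv_one_sub_one ht).pow 2))
  refine h.congr' ?_ .rfl
  filter_upwards [(ht.const_sub 1).eventually_ne (b₂ := 0) (by simp)] with i hi
  field_simp
  ring

end Taylor

section PowerBounds

variable {α 𝕜 : Type*} [NormedField 𝕜] {l : Filter α} {f y : α → 𝕜} {m n : ℕ}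

lemma isBigO_pow_pow_of_tendsto_zero (hmn : m ≤ n) (hy : Tendsto y l (𝓝 0)) :
    (fun i => y i ^ n) =O[l] fun i => y i ^ m := by
  obtain ⟨k, rfl⟩ := Nat.exists_eq_add_of_le hmn
  simpa only [pow_add, mul_one] using
    (isBigO_refl (fun i => y i ^ m) l).mul ((hy.pow k).isBigO_one 𝕜)

lemma isBigO_pow_of_sub_const_mul_pow (c : 𝕜) (hmn : m ≤ n) (hy : Tendsto y l (𝓝 0))
    (hf : (fun i => f i - c * y i ^ m) =O[l] fun i => y i ^ n) : f =O[l] fun i => y i ^ m :=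
  ((hf.trans (isBigO_pow_pow_of_tendsto_zero hmn hy)).add
    (isBigO_const_mul_self c _ l)).congr_left fun _ => sub_add_cancel _ _

lemma isBigO_div_pow (hy : ∀ᶠ i in l, y i ≠ 0) (hf : f =O[l] fun i => y i ^ (m + n)) :
    (fun i => f i / y i ^ n) =O[l] fun i => y i ^ m := by
  simp only [div_eq_mul_inv]
  refine (hf.mul (isBigO_refl (fun i => (y i ^ n)⁻¹) l)).congr' .rfl ?_
  filter_upwards [hy] with i hi
  rw [pow_add, mul_inv_cancel_right₀ (pow_ne_zero n hi)]

end PowerBounds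

section Step

/-- The approximate Fatou (or Abel) coordinate at a parabolic fixed point, in the inverted variable
`s = 1 / y`: for suitable `β` and `γ` the germ `y ↦ y - a * y ^ 3 + ⋯` acts on it as the translation
by `2 * a`, up to `O(y ^ 3)`. -/
noncomputable def fatouCoord (β γ s : ℝ) : ℝ :=
  s ^ 2 + β * s - γ * Real.log s

variable {a b c β γ : ℝ}

-- The conditions on `β` and `γ` make the terms of order `y` and `y ^ 2` of the increment vanish.
lemma fatouCoord_inv_mul_sub_sub {y t : ℝ} (hβ : a * β = 2 * b)
    (hγ : a * γ = 3 * a ^ 2 - b * β - 2 * c) (hy : y ≠ 0) (ht : 1 - t ≠ 0) :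
    fatouCoord β γ (y * (1 - t))⁻¹ - fatouCoord β γ y⁻¹ - 2 * a =
      (((1 - t)⁻¹ ^ 2 - 1 - 2 * t - 3 * t ^ 2) + 2 * (t - (a * y ^ 2 - b * y ^ 3 - c * y ^ 4)) +
        3 * ((t - a * y ^ 2) * (t + a * y ^ 2))) / y ^ 2 +
      β * (((1 - t)⁻¹ - 1 - t) + (t - (a * y ^ 2 - b * y ^ 3))) / y ^ 1 +
      γ * ((Real.log (1 - t) + t) - (t - a * y ^ 2)) := by
  simp only [fatouCoord, Real.log_inv, Real.log_mul hy ht]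
  field_simp
  linear_combination (1 - t) ^ 2 * (y ^ 3 * hβ - y ^ 4 * hγ)

variable {α : Type*} {l : Filter α} {y : α → ℝ}

lemma isBigO_fatouCoord_inv_mul_sub {t : α → ℝ} (hβ : a * β = 2 * b)
    (hγ : a * γ = 3 * a ^ 2 - b * β - 2 * c) (hy : Tendsto y l (𝓝[≠] 0))
    (ht : (fun i => t i - (a * y i ^ 2 - b * y i ^ 3 - c * y i ^ 4)) =O[l] fun i => y i ^ 5) :
    (fun i => fatouCoord β γ (y i * (1 - t i))⁻¹ - fatouCoord β γ (y i)⁻¹ - 2 * a) =O[l]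
      fun i => y i ^ 3 := by
  obtain ⟨hy0, hyne⟩ := tendsto_nhdsWithin_iff.1 hy
  have ht4 : (fun i => t i - (a * y i ^ 2 - b * y i ^ 3)) =O[l] fun i => y i ^ 4 :=
    isBigO_pow_of_sub_const_mul_pow (-c) (by norm_num) hy0 (ht.congr_left fun i => by ring)
  have ht3 : (fun i => t i - a * y i ^ 2) =O[l] fun i => y i ^ 3 :=
    isBigO_pow_of_sub_const_mul_pow (-b) (by norm_num) hy0 (ht4.congr_left fun i => by ring)
  have ht2 : t =O[l] fun i => y i ^ 2 :=
    isBigO_pow_of_sub_const_mul_pow a (by norm_num) hy0 ht3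
  have ht0 : Tendsto t l (𝓝 0) := ht2.trans_tendsto (by simpa using hy0.pow 2)
  have hP : (fun i => (1 - t i)⁻¹ ^ 2 - 1 - 2 * t i - 3 * t i ^ 2) =O[l] fun i => y i ^ 5 := by
    refine ((isBigO_inv_one_sub_sq_sub ht0).trans (ht2.pow 3)).trans ?_
    simpa only [← pow_mul] using isBigO_pow_pow_of_tendsto_zero (by norm_num) hy0
  have hw : (fun i => (t i - a * y i ^ 2) * (t i + a * y i ^ 2)) =O[l] fun i => y i ^ 5 := by
    simpa only [← pow_add] using ht3.mul (ht2.add (isBigO_const_mul_self a _ l))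
  have hQ : (fun i => (1 - t i)⁻¹ - 1 - t i) =O[l] fun i => y i ^ 4 := by
    simpa only [← pow_mul] using (isBigO_inv_one_sub_sub ht0).trans (ht2.pow 2)
  have hL : (fun i => Real.log (1 - t i) + t i) =O[l] fun i => y i ^ 3 := by
    refine ((isBigO_log_one_sub_add_self ht0).trans (ht2.pow 2)).trans ?_
    simpa only [← pow_mul] using isBigO_pow_pow_of_tendsto_zero (by norm_num) hy0
  refine (((isBigO_div_pow (m := 3) (n := 2) hyne
    ((hP.add (ht.const_mul_left 2)).add (hw.const_mul_left 3))).add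
      (isBigO_div_pow (m := 3) (n := 1) hyne ((hQ.add ht4).const_mul_left β))).add
        ((hL.sub ht3).const_mul_left γ)).congr' ?_ .rfl
  filter_upwards [hyne, ht0.eventually_lt_const one_pos] with i hi hti
  exact (fatouCoord_inv_mul_sub_sub hβ hγ hi (by linarith)).symm

lemma isBigO_fatouCoord_inv_sub_inv {z : α → ℝ} (hβ : a * β = 2 * b)
    (hγ : a * γ = 3 * a ^ 2 - b * β - 2 * c) (hy : Tendsto y l (𝓝[≠] 0))
    (hz : (fun i => z i - (y i - a * y i ^ 3 + b * y i ^ 4 + c * y i ^ 5)) =O[l]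
      fun i => y i ^ 6) :
    (fun i => fatouCoord β γ (z i)⁻¹ - fatouCoord β γ (y i)⁻¹ - 2 * a) =O[l]
      fun i => y i ^ 3 := by
  have hyne : ∀ᶠ i in l, y i ≠ 0 := (tendsto_nhdsWithin_iff.1 hy).2
  have ht : (fun i => 1 - z i / y i - (a * y i ^ 2 - b * y i ^ 3 - c * y i ^ 4)) =O[l]
      fun i => y i ^ 5 := by
    refine (isBigO_div_pow (m := 5) (n := 1) hyne hz.neg_left).congr' ?_ .rfl
    filter_upwards [hyne] with i hi
    field_simp
    ring
  refine (isBigO_fatouCoord_inv_mul_sub hβ hγ hy ht).congr' ?_ .rfl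
  filter_upwards [hyne] with i hi
  rw [sub_sub_cancel, mul_div_cancel₀ _ hi]

end Step

section Inversion

variable {α : Type*} {l : Filter α} {s R : α → ℝ} {β γ c : ℝ}

lemma tendsto_log_div_self_atTop : Tendsto (fun s : ℝ => Real.log s / s) atTop (𝓝 0) :=
  Real.isLittleO_log_id_atTop.tendsto_div_nhds_zero

lemma tendsto_fatouCoord_div_sq_atTop (β γ : ℝ) :
    Tendsto (fun s => fatouCoord β γ s / s ^ 2) atTop (𝓝 1) := by
  have h : Tendsto (fun s : ℝ => 1 + β * s⁻¹ - γ * (Real.log s / s * s⁻¹)) atTop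
      (𝓝 (1 + β * 0 - γ * (0 * 0))) :=
    ((tendsto_inv_atTop_zero.const_mul β).const_add 1).sub
      ((tendsto_log_div_self_atTop.mul tendsto_inv_atTop_zero).const_mul γ)
  simp only [mul_zero, add_zero, sub_zero] at h
  refine h.congr' ?_
  filter_upwards [eventually_ne_atTop 0] with s hs
  rw [fatouCoord]
  field_simp

lemma tendsto_div_of_fatouCoord_div_sq (hs : Tendsto s l atTop) (hR : ∀ᶠ i in l, 0 ≤ R i)
    (h : Tendsto (fun i => fatouCoord β γ (s i) / R i ^ 2) l (𝓝 1)) :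
    Tendsto (fun i => R i / s i) l (𝓝 1) := by
  have hsq := (((tendsto_fatouCoord_div_sq_atTop β γ).comp hs).div h one_ne_zero).sqrt
  rw [div_one, Real.sqrt_one] at hsq
  refine hsq.congr' ?_
  filter_upwards [hs.eventually_gt_atTop 0, hR, h.eventually_ne one_ne_zero] with i hsi hRi hV
  have hV0 : fatouCoord β γ (s i) ≠ 0 := fun h0 => hV (by simp [h0])
  rw [Pi.div_apply, Function.comp_apply, div_div_div_cancel_left' _ _ hV0, ← div_pow,
    Real.sqrt_sq (by positivity)]

lemma tendsto_div_of_fatouCoord_sub_sq (hs : Tendsto s l atTop) (hR : Tendsto R l atTop)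
    (h : Tendsto (fun i => fatouCoord β γ (s i) - R i ^ 2) l (𝓝 c)) :
    Tendsto (fun i => R i / s i) l (𝓝 1) := by
  refine tendsto_div_of_fatouCoord_div_sq (β := β) (γ := γ) hs (hR.eventually_ge_atTop 0) ?_
  have h' := (h.div_atTop ((tendsto_pow_atTop two_ne_zero).comp hR)).add_const 1
  rw [zero_add] at h'
  refine h'.congr' ?_
  filter_upwards [hR.eventually_ne_atTop 0] with i hi
  simp only [Function.comp_apply]
  field_simp
  ring

lemma tendsto_pow_three_mul_inv_sq_sub (hs : Tendsto s l atTop) (hR : Tendsto R l atTop)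
    (h : Tendsto (fun i => fatouCoord β γ (s i) - R i ^ 2) l (𝓝 c)) :
    Tendsto (fun i => R i ^ 3 * ((s i)⁻¹ ^ 2 - (R i)⁻¹ ^ 2)) l (𝓝 β) := by
  have hlim := (tendsto_div_of_fatouCoord_sub_sq hs hR h).mul
    ((((tendsto_log_div_self_atTop.comp hs).const_mul γ).const_sub β).sub (h.div_atTop hs))
  simp only [mul_zero, sub_zero, one_mul] at hlim
  refine hlim.congr' ?_
  filter_upwards [hs.eventually_ne_atTop 0, hR.eventually_ne_atTop 0] with i hsi hRi
  simp only [fatouCoord, Function.comp_apply]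
  field_simp
  ring

lemma tendsto_sub_of_fatouCoord_sub_sq (hs : Tendsto s l atTop) (hR : Tendsto R l atTop)
    (h : Tendsto (fun i => fatouCoord β γ (s i) - R i ^ 2) l (𝓝 c)) :
    Tendsto (fun i => s i - R i) l (𝓝 (-(β / 2))) := by
  have hRs := tendsto_div_of_fatouCoord_sub_sq hs hR h
  have hlim := ((h.div_atTop hs).sub
    (((tendsto_log_div_self_atTop.comp hs).const_mul γ).const_sub β)).div
      (hRs.const_add 1) (by norm_num)
  have hval : (0 - (β - γ * 0)) / (1 + 1) = -(β / 2) := by ring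
  rw [hval] at hlim
  refine hlim.congr' ?_
  filter_upwards [hs.eventually_gt_atTop 0, hR.eventually_gt_atTop 0] with i hsi hRi
  simp only [fatouCoord, Function.comp_apply, Pi.div_apply]
  field_simp
  ring

-- `R ^ 3 * (s⁻¹ - R⁻¹) = R ^ 2 * (R ^ 2 - s ^ 2) / (s * (R + s))`, where `R ^ 2 - s ^ 2` is
-- `β * s - γ * log s - c + o(1)` and `s - R` tends to `-β / 2`.
lemma tendsto_pow_three_mul_inv_sub_expansion (hs : Tendsto s l atTop) (hR : Tendsto R l atTop)
    (h : Tendsto (fun i => fatouCoord β γ (s i) - R i ^ 2) l (𝓝 c)) :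
    Tendsto (fun i => R i ^ 3 * ((s i)⁻¹ - ((R i)⁻¹ + β / 2 * (R i)⁻¹ ^ 2 -
      γ / 2 * Real.log (R i) * (R i)⁻¹ ^ 3))) l (𝓝 (β ^ 2 / 8 - c / 2)) := by
  have hRs := tendsto_div_of_fatouCoord_sub_sq hs hR h
  have hd := tendsto_sub_of_fatouCoord_sub_sq hs hR h
  have hden : Tendsto (fun i => (1 + R i / s i)⁻¹) l (𝓝 (1 / 2)) := by
    convert (hRs.const_add 1).inv₀ (by norm_num) using 2
    norm_num
  have hlog : Tendsto (fun i => Real.log (R i / s i)) l (𝓝 0) := by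
    simpa using hRs.log one_ne_zero
  have hlogd : Tendsto (fun i => Real.log (s i) / s i * (s i - R i)) l (𝓝 0) := by
    simpa using (tendsto_log_div_self_atTop.comp hs).mul hd
  have hlim := (((hd.mul hRs).mul hden).const_mul (-(β / 2))).add ((hlog.const_mul (γ / 2)).add
    ((((hlogd.mul ((hRs.const_mul 2).const_add 1)).mul hden).const_mul (γ / 2)).sub
      (h.mul ((hRs.pow 2).mul hden))))
  have hval : -(β / 2) * (-(β / 2) * 1 * (1 / 2)) + (γ / 2 * 0 +
      (γ / 2 * (0 * (1 + 2 * 1) * (1 / 2)) - c * (1 ^ 2 * (1 / 2)))) = β ^ 2 / 8 - c / 2 := by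
    ring
  rw [hval] at hlim
  refine hlim.congr' ?_
  filter_upwards [hs.eventually_gt_atTop 0, hR.eventually_gt_atTop 0] with i hsi hRi
  rw [fatouCoord, Real.log_div hRi.ne' hsi.ne']
  field_simp
  ring

end Inversion

section Sequences

lemma tendsto_div_natCast_of_tendsto_succ_sub {u : ℕ → ℝ} {κ : ℝ}
    (h : Tendsto (fun k => u (k + 1) - u k) atTop (𝓝 κ)) :
    Tendsto (fun k : ℕ => u k / k) atTop (𝓝 κ) := by
  have hlim := h.cesaro.add (tendsto_const_div_atTop_nhds_zero_nat (u 0))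
  rw [add_zero] at hlim
  refine hlim.congr fun k => ?_
  rw [Finset.sum_range_sub]
  ring

lemma exists_tendsto_sub_mul_of_summable_succ_sub {u : ℕ → ℝ} {κ : ℝ}
    (h : Summable fun k => u (k + 1) - u k - κ) :
    ∃ c, Tendsto (fun k : ℕ => u k - κ * k) atTop (𝓝 c) := by
  refine ⟨_, (h.hasSum.tendsto_sum_nat.add_const (u 0)).congr fun k => ?_⟩
  rw [Finset.sum_sub_distrib, Finset.sum_range_sub, Finset.sum_const, Finset.card_range,
    nsmul_eq_mul]
  ring

lemma tendsto_nhdsGT_zero_of_forall_lt {f : ℝ → ℝ} {δ : ℝ} {e : ℕ → ℝ}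
    (hf : ContinuousOn f (Ioo 0 δ)) (hlt : ∀ y ∈ Ioo 0 δ, f y ∈ Ioo 0 y)
    (h0 : e 0 ∈ Ioo 0 δ) (hrec : ∀ k, e (k + 1) = f (e k)) :
    Tendsto e atTop (𝓝[>] 0) := by
  have hmem : ∀ k, e k ∈ Ioo 0 δ := fun k => by
    induction k with
    | zero => exact h0
    | succ k ih =>
      rw [hrec]
      exact ⟨(hlt _ ih).1, (hlt _ ih).2.trans ih.2⟩
  have hanti : Antitone e := antitone_nat_of_succ_le fun k => by
    rw [hrec]
    exact (hlt _ (hmem k)).2.le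
  have hlim := tendsto_atTop_ciInf hanti ⟨0, forall_mem_range.2 fun k => (hmem k).1.le⟩
  set L := ⨅ k, e k
  have hL0 : 0 ≤ L := ge_of_tendsto' hlim fun k => (hmem k).1.le
  have hLδ : L < δ := (hanti.le_of_tendsto hlim 0).trans_lt h0.2
  have hL : L = 0 := by
    by_contra hne
    have hLmem : L ∈ Ioo 0 δ := ⟨hL0.lt_of_ne' hne, hLδ⟩
    have hcont : ContinuousAt f L := hf.continuousAt (isOpen_Ioo.mem_nhds hLmem)
    have hfix : f L = L := tendsto_nhds_unique
      ((hcont.tendsto.comp hlim).congr fun k => (hrec k).symm)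
      (hlim.comp (tendsto_add_atTop_nat 1))
    exact (hlt L hLmem).2.ne hfix
  rw [hL] at hlim
  exact tendsto_nhdsWithin_iff.2 ⟨hlim, .of_forall fun k => (hmem k).1⟩

lemma isBigO_rpow_neg_half_of_fatouCoord_inv {e : ℕ → ℝ} {β γ κ : ℝ} (hκ : 0 < κ)
    (he : Tendsto e atTop (𝓝[>] 0))
    (h : Tendsto (fun k : ℕ => fatouCoord β γ (e k)⁻¹ / k) atTop (𝓝 κ)) :
    e =O[atTop] fun k : ℕ => (k : ℝ) ^ (-(1 / 2) : ℝ) := by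
  have hsqrt : Tendsto (fun k : ℕ => √(κ * k) / (e k)⁻¹) atTop (𝓝 1) := by
    refine tendsto_div_of_fatouCoord_div_sq (β := β) (γ := γ) (tendsto_inv_nhdsGT_zero.comp he)
      (.of_forall fun k => Real.sqrt_nonneg _) ?_
    have hlim := h.div_const κ
    rw [div_self hκ.ne'] at hlim
    refine hlim.congr fun k => ?_
    rw [Real.sq_sqrt (by positivity), div_div, mul_comm (k : ℝ)]
  have hbound := (hsqrt.isBigO_one ℝ).mul
    (isBigO_const_mul_self (√κ)⁻¹ (fun k : ℕ => (k : ℝ) ^ (-(1 / 2) : ℝ)) atTop)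
  simp only [one_mul] at hbound
  refine hbound.congr' ?_ .rfl
  filter_upwards [eventually_gt_atTop 0] with k hk
  have : √(k : ℝ) ≠ 0 := by positivity
  rw [Real.rpow_neg k.cast_nonneg, ← Real.sqrt_eq_rpow, Real.sqrt_mul hκ.le]
  field_simp

theorem exists_tendsto_fatouCoord_inv_sub_mul {e : ℕ → ℝ} {a b c β γ : ℝ} (ha : 0 < a)
    (hβ : a * β = 2 * b) (hγ : a * γ = 3 * a ^ 2 - b * β - 2 * c)
    (he : Tendsto e atTop (𝓝[>] 0))
    (hrec : (fun k => e (k + 1) - (e k - a * e k ^ 3 + b * e k ^ 4 + c * e k ^ 5)) =O[atTop]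
      fun k => e k ^ 6) :
    ∃ C, Tendsto (fun k : ℕ => fatouCoord β γ (e k)⁻¹ - 2 * a * k) atTop (𝓝 C) := by
  have hstep := isBigO_fatouCoord_inv_sub_inv hβ hγ (he.mono_right (nhdsGT_le_nhdsNE 0)) hrec
  have he3 : Tendsto (fun k => e k ^ 3) atTop (𝓝 0) := by
    simpa using (tendsto_nhdsWithin_iff.1 he).1.pow 3
  have hincr := (hstep.trans_tendsto he3).add_const (2 * a)
  simp only [sub_add_cancel, zero_add] at hincr
  have hcube : (fun k => e k ^ 3) =O[atTop] fun k : ℕ => (k : ℝ) ^ (-(3 / 2) : ℝ) := by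
    refine ((isBigO_rpow_neg_half_of_fatouCoord_inv (by positivity) he
      (tendsto_div_natCast_of_tendsto_succ_sub hincr)).pow 3).congr_right fun k => ?_
    rw [← Real.rpow_mul_natCast k.cast_nonneg]
    norm_num
  exact exists_tendsto_sub_mul_of_summable_succ_sub
    (summable_of_isBigO_nat (Real.summable_nat_rpow.2 (by norm_num)) (hstep.trans hcube))

variable {s : ℕ → ℝ} {β γ ω c : ℝ}

lemma tendsto_mul_natCast_rpow_half_atTop (hω : 0 < ω) :
    Tendsto (fun k : ℕ => ω * (k : ℝ) ^ ((1 : ℝ) / 2)) atTop atTop :=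
  ((tendsto_rpow_atTop one_half_pos).comp tendsto_natCast_atTop_atTop).const_mul_atTop hω

lemma mul_natCast_rpow_half_sq (ω : ℝ) (k : ℕ) :
    (ω * (k : ℝ) ^ ((1 : ℝ) / 2)) ^ 2 = ω ^ 2 * k := by
  rw [mul_pow, ← Real.sqrt_eq_rpow, Real.sq_sqrt k.cast_nonneg]

lemma natCast_rpow_half_pow_three (k : ℕ) :
    ((k : ℝ) ^ ((1 : ℝ) / 2)) ^ 3 = (k : ℝ) ^ ((3 : ℝ) / 2) := by
  rw [← Real.rpow_mul_natCast k.cast_nonneg]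
  norm_num

lemma tendsto_rpow_mul_inv_sub_expansion (hω : 0 < ω) (hs : Tendsto s atTop atTop)
    (h : Tendsto (fun k : ℕ => fatouCoord β γ (s k) - ω ^ 2 * k) atTop (𝓝 c)) :
    Tendsto (fun k : ℕ => (k : ℝ) ^ ((3 : ℝ) / 2) * ((s k)⁻¹ -
      (1 / (ω * (k : ℝ) ^ ((1 : ℝ) / 2)) + β / (2 * ω ^ 2 * k) -
        γ / (4 * ω ^ 3) * Real.log k / (k : ℝ) ^ ((3 : ℝ) / 2)))) atTop
      (𝓝 ((β ^ 2 / 8 - c / 2 - γ / 2 * Real.log ω) / ω ^ 3)) := by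
  simp only [← mul_natCast_rpow_half_sq] at h
  have hlim := tendsto_pow_three_mul_inv_sub_expansion hs (tendsto_mul_natCast_rpow_half_atTop hω) h
  refine ((hlim.sub_const (γ / 2 * Real.log ω)).div_const (ω ^ 3)).congr' ?_
  filter_upwards [eventually_gt_atTop 0] with k hk
  have hk' : (0 : ℝ) < k := Nat.cast_pos.2 hk
  have hβ : β / (2 * ω ^ 2 * k) = β / 2 * (ω * (k : ℝ) ^ ((1 : ℝ) / 2))⁻¹ ^ 2 := by
    rw [inv_pow, mul_natCast_rpow_half_sq]
    field_simp
  rw [hβ, Real.log_mul hω.ne' (by positivity), Real.log_rpow hk',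
    ← natCast_rpow_half_pow_three]
  have : 0 < (k : ℝ) ^ ((1 : ℝ) / 2) := by positivity
  field_simp
  ring

lemma tendsto_rpow_mul_inv_sq_sub (hω : 0 < ω) (hs : Tendsto s atTop atTop)
    (h : Tendsto (fun k : ℕ => fatouCoord β γ (s k) - ω ^ 2 * k) atTop (𝓝 c)) :
    Tendsto (fun k : ℕ => (k : ℝ) ^ ((3 : ℝ) / 2) * ((s k)⁻¹ ^ 2 - 1 / (ω ^ 2 * k))) atTop
      (𝓝 (β / ω ^ 3)) := by
  simp only [← mul_natCast_rpow_half_sq] at h ⊢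
  have hlim := tendsto_pow_three_mul_inv_sq_sub hs (tendsto_mul_natCast_rpow_half_atTop hω) h
  refine (hlim.div_const (ω ^ 3)).congr fun k => ?_
  rw [← natCast_rpow_half_pow_three]
  field_simp

end Sequences

section Logistic

lemma sub_cube_add_quartic_mem_Ioo {y : ℝ} (hy : y ∈ Ioo 0 (1 / 3)) :
    y - 18 * y ^ 3 + 27 * y ^ 4 ∈ Ioo 0 y := by
  obtain ⟨hy0, hy1⟩ := hy
  constructor
  · have h1 : 0 < 1 - 3 * y := by linarith
    have h2 : 0 < 1 + 3 * y - 9 * y ^ 2 := by nlinarith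
    calc 0 < y * (1 - 3 * y) * (1 + 3 * y - 9 * y ^ 2) := by positivity
      _ = y - 18 * y ^ 3 + 27 * y ^ 4 := by ring
  · have h : 0 < 9 * y ^ 3 * (2 - 3 * y) := mul_pos (by positivity) (by linarith)
    linarith

variable {x : ℕ → ℝ}

lemma two_thirds_sub_logistic_two_mul_succ (hrec : ∀ k, x (k + 1) = 3 * x k * (1 - x k)) (k : ℕ) :
    2 / 3 - x (2 * (k + 1)) =
      (2 / 3 - x (2 * k)) - 18 * (2 / 3 - x (2 * k)) ^ 3 + 27 * (2 / 3 - x (2 * k)) ^ 4 := by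
  rw [mul_add_one, hrec, hrec]
  ring

lemma tendsto_two_thirds_sub_logistic_nhdsGT (h0 : x 0 ∈ Ioo (1 / 3) (2 / 3))
    (hrec : ∀ k, x (k + 1) = 3 * x k * (1 - x k)) :
    Tendsto (fun k => 2 / 3 - x (2 * k)) atTop (𝓝[>] 0) :=
  tendsto_nhdsGT_zero_of_forall_lt (δ := 1 / 3) (f := fun y => y - 18 * y ^ 3 + 27 * y ^ 4)
    (by fun_prop) (fun _ => sub_cube_add_quartic_mem_Ioo)
    ⟨by simpa using h0.2, by rw [mul_zero]; linarith [h0.1]⟩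
    (two_thirds_sub_logistic_two_mul_succ hrec)

lemma exists_tendsto_fatouCoord_logistic (h0 : x 0 ∈ Ioo (1 / 3) (2 / 3))
    (hrec : ∀ k, x (k + 1) = 3 * x k * (1 - x k)) :
    ∃ C, Tendsto (fun k : ℕ => fatouCoord 3 (99 / 2) (2 / 3 - x (2 * k))⁻¹ - 6 ^ 2 * k) atTop
      (𝓝 C) := by
  have h := exists_tendsto_fatouCoord_inv_sub_mul (a := 18) (b := 27) (c := 0) (β := 3)
    (γ := 99 / 2) (by norm_num) (by norm_num) (by norm_num)
    (tendsto_two_thirds_sub_logistic_nhdsGT h0 hrec)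
    ((isBigO_zero _ _).congr_left fun k => by
      rw [two_thirds_sub_logistic_two_mul_succ hrec]; ring)
  convert h using 6
  norm_num

end Logistic

theorem stmt_4_general (x : ℕ → ℝ) (h0 : x 0 ∈ Ioo (1 / 3) (2 / 3))
    (hrec : ∀ k, x (k + 1) = 3 * x k * (1 - x k)) :
    (∃ Co : ℝ, Tendsto (fun k : ℕ => (k : ℝ) ^ ((3 : ℝ) / 2) *
        ((x (2 * k + 1) - 2 / 3) -
          (1 / (6 * (k : ℝ) ^ ((1 : ℝ) / 2)) - 1 / (24 * (k : ℝ)) -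
            11 / 192 * Real.log k / (k : ℝ) ^ ((3 : ℝ) / 2)))) atTop (𝓝 Co)) ∧
    (∃ Ce : ℝ, Tendsto (fun k : ℕ => (k : ℝ) ^ ((3 : ℝ) / 2) *
        ((2 / 3 - x (2 * k)) -
          (1 / (6 * (k : ℝ) ^ ((1 : ℝ) / 2)) + 1 / (24 * (k : ℝ)) -
            11 / 192 * Real.log k / (k : ℝ) ^ ((3 : ℝ) / 2)))) atTop (𝓝 Ce)) := by
  obtain ⟨C, hC⟩ := exists_tendsto_fatouCoord_logistic h0 hrec
  have hs := tendsto_inv_nhdsGT_zero.comp (tendsto_two_thirds_sub_logistic_nhdsGT h0 hrec)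
  have hexp := tendsto_rpow_mul_inv_sub_expansion (by norm_num) hs hC
  have hsq := tendsto_rpow_mul_inv_sq_sub (by norm_num) hs hC
  simp only [Function.comp_apply, inv_inv] at hexp hsq
  constructor
  · refine ⟨_, (hexp.sub (hsq.const_mul 3)).congr fun k => ?_⟩
    rw [hrec (2 * k)]
    ring
  · exact ⟨_, hexp.congr fun k => by ring⟩

theorem stmt_4 (x : ℕ → ℝ) (h0 : x 0 = 1/2)
    (hrec : ∀ k, x (k + 1) = 3 * x k * (1 - x k)) :
    (∃ Co : ℝ, Tendsto (fun k : ℕ => (k : ℝ)^((3:ℝ)/2) *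
        ((x (2*k+1) - 2/3) -
          (1 / (6 * (k : ℝ)^((1:ℝ)/2)) - 1 / (24 * (k : ℝ)) -
            (11/192) * Real.log k / (k : ℝ)^((3:ℝ)/2)))) atTop (𝓝 Co)) ∧
    (∃ Ce : ℝ, Tendsto (fun k : ℕ => (k : ℝ)^((3:ℝ)/2) *
        ((2/3 - x (2*k)) -
          (1 / (6 * (k : ℝ)^((1:ℝ)/2)) + 1 / (24 * (k : ℝ)) -
            (11/192) * Real.log k / (k : ℝ)^((3:ℝ)/2)))) atTop (𝓝 Ce)) :=
  stmt_4_general x (by norm_num [h0]) hrec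
end

section
/- Let y : ℕ → ℝ be defined by y₀ = 1 and y_k = y_{k-1}/(1 + y_{k-1}·ln(1 + y_{k-1})) for k ≥ 1. Then lim_{k→∞} k^{1/2}·y_k = 1/√2. -/
open Filter Topology

/-!
The reciprocals `x k = (y k)⁻¹` satisfy `x (k + 1) = x k + log (1 + (x k)⁻¹)`. They increase, and
a finite limit would be a fixed point of `u ↦ u + log (1 + u⁻¹)`, so they tend to infinity. Hence
`x k * (x (k + 1) - x k) → 1`, so the increments of `x k ^ 2` tend to `2`, and averaging them gives
`x k ^ 2 / k → 2`.
-/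

theorem tendsto_inv_smul_of_tendsto_sub {E : Type*} [NormedAddCommGroup E] [NormedSpace ℝ E]
    {u : ℕ → E} {l : E} (h : Tendsto (fun n ↦ u (n + 1) - u n) atTop (𝓝 l)) :
    Tendsto (fun n : ℕ ↦ (n : ℝ)⁻¹ • u n) atTop (𝓝 l) := by
  have initial_term : Tendsto (fun n : ℕ ↦ (n : ℝ)⁻¹ • u 0) atTop (𝓝 0) := by
    simpa using (tendsto_inv_atTop_nhds_zero_nat (𝕜 := ℝ)).smul_const (u 0)
  have average := h.cesaro_smul
  simp only [Finset.sum_range_sub] at average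
  simpa [← smul_add] using average.add initial_term

theorem tendsto_sq_div_of_tendsto_mul_sub {x : ℕ → ℝ} {c : ℝ} (hx : Tendsto x atTop atTop)
    (h : Tendsto (fun k ↦ x k * (x (k + 1) - x k)) atTop (𝓝 c)) :
    Tendsto (fun k : ℕ ↦ x k ^ 2 / k) atTop (𝓝 (2 * c)) := by
  have sub_tendsto_zero : Tendsto (fun k ↦ x (k + 1) - x k) atTop (𝓝 0) := by
    refine (h.div_atTop hx).congr' ?_
    filter_upwards [hx.eventually_ne_atTop 0] with k hk
    exact mul_div_cancel_left₀ _ hk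
  have sq_sub_tendsto : Tendsto (fun k ↦ x (k + 1) ^ 2 - x k ^ 2) atTop (𝓝 (2 * c)) := by
    have expansion := (h.const_mul 2).add (sub_tendsto_zero.pow 2)
    rw [zero_pow two_ne_zero, add_zero] at expansion
    exact expansion.congr fun k ↦ by ring
  simpa only [smul_eq_mul, inv_mul_eq_div] using
    tendsto_inv_smul_of_tendsto_sub (u := fun k ↦ x k ^ 2) sq_sub_tendsto

theorem tendsto_atTop_of_lt_map {α : Type*} [ConditionallyCompleteLinearOrder α]
    [TopologicalSpace α] [OrderTopology α] {F : α → α} {x : ℕ → α}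
    (hF : ContinuousOn F (Set.Ici (x 0))) (hlt : ∀ u, x 0 ≤ u → u < F u)
    (hx : ∀ k, x (k + 1) = F (x k)) : Tendsto x atTop atTop := by
  have x_zero_le (k : ℕ) : x 0 ≤ x k := by
    induction k with
    | zero => exact le_rfl
    | succ k ih => exact ih.trans ((hlt _ ih).le.trans_eq (hx k).symm)
  have x_mono : Monotone x :=
    monotone_nat_of_le_succ fun k ↦ (hlt _ (x_zero_le k)).le.trans_eq (hx k).symm
  refine (tendsto_atTop_of_monotone x_mono).resolve_right ?_
  rintro ⟨l, hl⟩
  have x_zero_le_l : x 0 ≤ l := ge_of_tendsto' hl x_zero_le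
  have map_tendsto : Tendsto (fun k ↦ F (x k)) atTop (𝓝 (F l)) :=
    (hF l x_zero_le_l).tendsto.comp
      (tendsto_nhdsWithin_iff.2 ⟨hl, Eventually.of_forall x_zero_le⟩)
  have l_eq : l = F l :=
    tendsto_nhds_unique ((hl.comp (tendsto_add_atTop_nat 1)).congr hx) map_tendsto
  exact (hlt l x_zero_le_l).ne l_eq

theorem inv_div_one_add_mul {K : Type*} [Field K] {a : K} (ha : a ≠ 0) (b : K) :
    (a / (1 + a * b))⁻¹ = a⁻¹ + b := by
  field_simp

theorem pos_of_div_one_add_mul {K : Type*} [Field K] [LinearOrder K] [IsStrictOrderedRing K]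
    {f : K → K} {y : ℕ → K} (hf : ∀ t, 0 < t → 0 ≤ f t) (h0 : 0 < y 0)
    (hrec : ∀ k, y (k + 1) = y k / (1 + y k * f (y k))) (k : ℕ) : 0 < y k := by
  induction k with
  | zero => exact h0
  | succ k ih =>
    have := hf _ ih
    rw [hrec]
    positivity

theorem tendsto_atTop_of_add_log_one_add_inv {x : ℕ → ℝ} (h0 : 0 < x 0)
    (hx : ∀ k, x (k + 1) = x k + Real.log (1 + (x k)⁻¹)) : Tendsto x atTop atTop := by
  refine tendsto_atTop_of_lt_map (F := fun u ↦ u + Real.log (1 + u⁻¹)) (fun u hu ↦ ?_)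
    (fun u hu ↦ ?_) hx
  · have u_ne_zero : u ≠ 0 := (h0.trans_le hu).ne'
    have one_add_inv_ne_zero : 1 + u⁻¹ ≠ 0 := by
      have := h0.trans_le hu
      positivity
    exact ContinuousAt.continuousWithinAt (by fun_prop (disch := assumption))
  · exact lt_add_of_pos_right u
      (Real.log_pos (lt_add_of_pos_right 1 (inv_pos.2 (h0.trans_le hu))))

theorem tendsto_sq_div_of_add_log_one_add_inv {x : ℕ → ℝ} (h0 : 0 < x 0)
    (hx : ∀ k, x (k + 1) = x k + Real.log (1 + (x k)⁻¹)) :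
    Tendsto (fun k : ℕ ↦ x k ^ 2 / k) atTop (𝓝 2) := by
  have x_tendsto := tendsto_atTop_of_add_log_one_add_inv h0 hx
  have mul_sub_tendsto : Tendsto (fun k ↦ x k * (x (k + 1) - x k)) atTop (𝓝 1) := by
    simpa [Function.comp_def, hx] using (Real.tendsto_mul_log_one_add_div_atTop 1).comp x_tendsto
  simpa only [mul_one] using tendsto_sq_div_of_tendsto_mul_sub x_tendsto mul_sub_tendsto

theorem stmt_7_general (y : ℕ → ℝ) (h0 : 0 < y 0)
    (hrec : ∀ k, y (k + 1) = y k / (1 + y k * Real.log (1 + y k))) :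
    Tendsto (fun k : ℕ => (k : ℝ)^((1:ℝ)/2) * y k) atTop
      (𝓝 (1 / Real.sqrt 2)) := by
  have y_pos : ∀ k, 0 < y k :=
    pos_of_div_one_add_mul (f := fun t ↦ Real.log (1 + t))
      (fun t ht ↦ Real.log_nonneg (le_add_of_nonneg_right ht.le)) h0 hrec
  have inv_succ (k : ℕ) : (y (k + 1))⁻¹ = (y k)⁻¹ + Real.log (1 + (y k)⁻¹⁻¹) := by
    rw [hrec, inv_div_one_add_mul (y_pos k).ne', inv_inv]
  have inv_sq_div_tendsto : Tendsto (fun k : ℕ ↦ (y k)⁻¹ ^ 2 / k) atTop (𝓝 2) :=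
    tendsto_sq_div_of_add_log_one_add_inv (x := fun k ↦ (y k)⁻¹) (inv_pos.2 h0) inv_succ
  rw [one_div √2, ← Real.sqrt_inv]
  refine (inv_sq_div_tendsto.inv₀ two_ne_zero).sqrt.congr fun k ↦ ?_
  rw [inv_div, inv_pow, div_inv_eq_mul, Real.sqrt_mul k.cast_nonneg, Real.sqrt_sq (y_pos k).le,
    Real.sqrt_eq_rpow]

theorem stmt_7 (y : ℕ → ℝ) (h0 : y 0 = 1)
    (hrec : ∀ k, y (k + 1) = y k / (1 + y k * Real.log (1 + y k))) :
    Tendsto (fun k : ℕ => (k : ℝ)^((1:ℝ)/2) * y k) atTop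
      (𝓝 (1 / Real.sqrt 2)) :=
  stmt_7_general y (h0 ▸ one_pos) hrec
end

section
/- Let θ be the unique real number with cos θ = θ. Let x : ℕ → ℝ be defined by x₀ = 0 and x_k = cos(x_{k-1}) for k ≥ 1. Then the limits lim_{k→∞} (x_{2k+1} - θ)/(1 - θ²)^k and lim_{k→∞} (θ - x_{2k})/(1 - θ²)^k both exist and are strictly positive real numbers. -/
open Filter Topology

/-!
Along an orbit of a map `f` converging to a fixed point `a` with multiplier `m = f' a`,
`0 < |m| < 1`, consecutive errors satisfy `e (n + 1) = m * e n + O((e n) ^ 2)`. Hence the factors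
`e (n + 1) / (m * e n)` are `1 + O(e n)`, the errors are summable by the ratio test, and
`e n / m ^ n` converges as an infinite product with nonzero value (Koenigs). For the cosine
`m = -sin θ`, so `m ^ 2 = 1 - θ ^ 2`; since `cos` is decreasing, the orbit alternates around `θ`,
which gives the signs of the two limits.
-/

section Koenigs

variable {𝕜 : Type*}

theorem exists_ne_zero_tendsto_of_summable_norm_div_sub_one [NormedField 𝕜] [CompleteSpace 𝕜]
    {y : ℕ → 𝕜} (hy : ∀ n, y n ≠ 0) (hsum : Summable fun n => ‖y (n + 1) / y n - 1‖) :
    ∃ L, L ≠ 0 ∧ Tendsto y atTop (𝓝 L) := by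
  have hfactor : ∀ n, 1 + (y (n + 1) / y n - 1) ≠ 0 := fun n => by
    rw [add_sub_cancel]
    exact div_ne_zero (hy (n + 1)) (hy n)
  refine ⟨y 0 * ∏' n, (1 + (y (n + 1) / y n - 1)),
    mul_ne_zero (hy 0) (tprod_one_add_ne_zero_of_summable hfactor hsum), ?_⟩
  have htelescope : ∀ n, y 0 * ∏ k ∈ Finset.range n, (1 + (y (k + 1) / y k - 1)) = y n := by
    intro n
    induction n with
    | zero => simp
    | succ n ih =>
      rw [Finset.prod_range_succ, ← mul_assoc, ih, add_sub_cancel, mul_div_cancel₀ _ (hy n)]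
  exact ((multipliable_one_add_of_summable hsum).hasProd.tendsto_prod_nat.const_mul (y 0)).congr
    htelescope

theorem exists_ne_zero_tendsto_div_pow_of_isBigO_sq [NormedField 𝕜] [CompleteSpace 𝕜]
    {e : ℕ → 𝕜} {m : 𝕜} (hm0 : m ≠ 0) (hm1 : ‖m‖ < 1) (he : ∀ n, e n ≠ 0)
    (hlim : Tendsto e atTop (𝓝 0))
    (hrec : (fun n => e (n + 1) - m * e n) =O[atTop] fun n => e n ^ 2) :
    ∃ L, L ≠ 0 ∧ Tendsto (fun n => e n / m ^ n) atTop (𝓝 L) := by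
  have hratio : (fun n => e (n + 1) / e n - m) =O[atTop] e := by
    refine (hrec.mul (Asymptotics.isBigO_refl (fun n => (e n)⁻¹) atTop)).congr (fun n => ?_)
      fun n => ?_
    · rw [sub_mul, mul_inv_cancel_right₀ (he n), div_eq_mul_inv]
    · rw [sq, mul_inv_cancel_right₀ (he n)]
  have hratio_lim : Tendsto (fun n => e (n + 1) / e n) atTop (𝓝 m) :=
    tendsto_sub_nhds_zero_iff.mp (hratio.trans_tendsto hlim)
  have hsum : Summable fun n => ‖e n‖ :=
    summable_of_ratio_test_tendsto_lt_one hm1 (.of_forall fun n => norm_ne_zero_iff.mpr (he n))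
      (by simpa only [norm_norm, norm_div] using hratio_lim.norm)
  have hfactor : (fun n => e (n + 1) / m ^ (n + 1) / (e n / m ^ n) - 1) =O[atTop] e := by
    refine (hratio.const_mul_left m⁻¹).congr_left fun n => ?_
    have := he n
    field_simp
    ring
  exact exists_ne_zero_tendsto_of_summable_norm_div_sub_one
    (fun n => div_ne_zero (he n) (pow_ne_zero n hm0))
    (summable_of_isBigO_nat hsum hfactor.norm_norm)

theorem isBigO_sub_sub_deriv_mul_sq [NontriviallyNormedField 𝕜] {f : 𝕜 → 𝕜} {a : 𝕜}
    (hf : AnalyticAt 𝕜 f a) :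
    (fun z => f z - f a - deriv f a * (z - a)) =O[𝓝 a] fun z => (z - a) ^ 2 := by
  obtain ⟨p, hp⟩ := hf
  have hslope : (fun z => dslope f a z - dslope f a a) =O[𝓝 a] fun z => z - a :=
    hp.has_fpower_series_dslope_fslope.differentiableAt.isBigO_sub
  refine (hslope.mul (Asymptotics.isBigO_refl (fun z => z - a) (𝓝 a))).congr (fun z => ?_)
    fun z => (sq (z - a)).symm
  rw [← sub_smul_dslope f a z, dslope_same, smul_eq_mul]
  ring

theorem exists_ne_zero_tendsto_sub_div_deriv_pow [NontriviallyNormedField 𝕜] [CompleteSpace 𝕜]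
    {f : 𝕜 → 𝕜} {a : 𝕜} {x : ℕ → 𝕜} (hf : AnalyticAt 𝕜 f a) (hfa : f a = a)
    (hm0 : deriv f a ≠ 0) (hm1 : ‖deriv f a‖ < 1) (hx : ∀ n, x (n + 1) = f (x n))
    (hlim : Tendsto x atTop (𝓝 a)) (hne : ∀ n, x n ≠ a) :
    ∃ L, L ≠ 0 ∧ Tendsto (fun n => (x n - a) / deriv f a ^ n) atTop (𝓝 L) := by
  refine exists_ne_zero_tendsto_div_pow_of_isBigO_sq hm0 hm1 (fun n => sub_ne_zero.mpr (hne n))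
    (tendsto_sub_nhds_zero_iff.mpr hlim) ?_
  simpa only [Function.comp_def, hfa, ← hx] using
    (isBigO_sub_sub_deriv_mul_sq hf).comp_tendsto hlim

end Koenigs

section Orbits

theorem tendsto_of_lipschitzOnWith_of_fixed {α : Type*} [PseudoMetricSpace α] {f : α → α}
    {s : Set α} {K : NNReal} {a : α} {x : ℕ → α} (hf : LipschitzOnWith K f s) (hK : K < 1)
    (ha : a ∈ s) (hfa : f a = a) (hxs : ∀ n, x n ∈ s) (hx : ∀ n, x (n + 1) = f (x n)) :
    Tendsto x atTop (𝓝 a) := by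
  have hstep : ∀ n, dist (x (n + 1)) a ≤ K * dist (x n) a := fun n => by
    simpa only [hx, hfa] using hf.dist_le_mul (x n) (hxs n) a ha
  have hgeom : ∀ n, dist (x n) a ≤ K ^ n * dist (x 0) a := fun n =>
    le_geom (u := fun k => dist (x k) a) K.coe_nonneg n fun k _ => hstep k
  refine tendsto_iff_dist_tendsto_zero.mpr
    (squeeze_zero (fun _ => dist_nonneg) hgeom ?_)
  simpa only [zero_mul] using
    (tendsto_pow_atTop_nhds_zero_of_lt_one K.coe_nonneg hK).mul_const (dist (x 0) a)

theorem lt_even_and_odd_lt_of_strictAntiOn {α : Type*} [Preorder α] {f : α → α} {s : Set α}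
    {a : α} {x : ℕ → α} (hf : StrictAntiOn f s) (ha : a ∈ s) (hfa : f a = a)
    (hxs : ∀ n, x n ∈ s) (hx : ∀ n, x (n + 1) = f (x n)) (h0 : a < x 0) (k : ℕ) :
    a < x (2 * k) ∧ x (2 * k + 1) < a := by
  have hdown : ∀ n, a < x n → x (n + 1) < a := fun n h => by
    simpa only [hx, hfa] using hf ha (hxs n) h
  have hup : ∀ n, x n < a → a < x (n + 1) := fun n h => by
    simpa only [hx, hfa] using hf (hxs n) ha h
  induction k with
  | zero => exact ⟨h0, hdown 0 h0⟩
  | succ k ih => exact ⟨hup _ ih.2, hdown _ (hup _ ih.2)⟩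

theorem exists_pos_tendsto_sub_div_deriv_pow_of_strictAntiOn {f : ℝ → ℝ} {s : Set ℝ} {a : ℝ}
    {x : ℕ → ℝ} (hf : AnalyticAt ℝ f a) (hanti : StrictAntiOn f s) (ha : a ∈ s) (hfa : f a = a)
    (hm0 : deriv f a ≠ 0) (hm1 : |deriv f a| < 1) (hxs : ∀ n, x n ∈ s)
    (hx : ∀ n, x (n + 1) = f (x n)) (h0 : a < x 0) (hlim : Tendsto x atTop (𝓝 a)) :
    ∃ L, 0 < L ∧ Tendsto (fun n => (x n - a) / deriv f a ^ n) atTop (𝓝 L) := by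
  have halt := lt_even_and_odd_lt_of_strictAntiOn hanti ha hfa hxs hx h0
  have hne : ∀ n, x n ≠ a := fun n => by
    obtain ⟨k, rfl | rfl⟩ := n.even_or_odd'
    exacts [(halt k).1.ne', (halt k).2.ne]
  obtain ⟨L, hL0, hL⟩ := exists_ne_zero_tendsto_sub_div_deriv_pow hf hfa hm0 hm1 hx hlim hne
  refine ⟨L, lt_of_le_of_ne ?_ hL0.symm, hL⟩
  have heven : Tendsto (fun k : ℕ => 2 * k) atTop atTop :=
    tendsto_id.const_mul_atTop' two_pos
  exact ge_of_tendsto' (hL.comp heven) fun k =>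
    div_nonneg (sub_pos.mpr (halt k).1).le ((even_two_mul k).pow_nonneg _)

end Orbits

section Cosine

theorem lipschitzOnWith_cos_Icc {r : ℝ} (hr : r ≤ Real.pi / 2) :
    LipschitzOnWith (Real.sin r).toNNReal Real.cos (Set.Icc (-r) r) := by
  refine (convex_Icc (-r) r).lipschitzOnWith_of_nnnorm_deriv_le
    (fun _ _ => Real.differentiableAt_cos) fun t ht => NNReal.coe_le_coe.mp ?_
  have ht' : |t| ≤ r := abs_le.mpr ht
  calc ‖deriv Real.cos t‖ = Real.sin |t| := by
        rw [Real.deriv_cos, norm_neg, Real.norm_eq_abs,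
          Real.abs_sin_eq_sin_abs_of_abs_le_pi (by linarith [Real.pi_pos])]
    _ ≤ Real.sin r :=
        Real.sin_le_sin_of_le_of_le_pi_div_two (by linarith [Real.pi_pos, abs_nonneg t]) hr ht'
    _ ≤ (Real.sin r).toNNReal := Real.le_coe_toNNReal _

theorem strictAntiOn_cos_Icc_zero_one : StrictAntiOn Real.cos (Set.Icc 0 1) :=
  Real.strictAntiOn_cos.mono (Set.Icc_subset_Icc_right (by linarith [Real.pi_gt_three]))

theorem mapsTo_cos_Icc_zero_one : Set.MapsTo Real.cos (Set.Icc 0 1) (Set.Icc 0 1) := fun t ht =>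
  ⟨(Real.cos_pos_of_le_one (abs_le.mpr ⟨by linarith [ht.1], ht.2⟩)).le, Real.cos_le_one t⟩

variable {θ : ℝ}

theorem pos_of_cos_eq_self (hθ : Real.cos θ = θ) : 0 < θ :=
  (Real.cos_pos_of_le_one (hθ ▸ Real.abs_cos_le_one θ)).trans_eq hθ

theorem lt_one_of_cos_eq_self (hθ : Real.cos θ = θ) : θ < 1 := by
  have hpos := pos_of_cos_eq_self hθ
  have hle : θ ≤ 1 := hθ ▸ Real.cos_le_one θ
  simpa only [hθ, Real.cos_zero] using
    strictAntiOn_cos_Icc_zero_one (Set.left_mem_Icc.mpr zero_le_one) ⟨hpos.le, hle⟩ hpos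

theorem exists_pos_tendsto_cos_orbit_sub_div_pow {x : ℕ → ℝ} (hθ : Real.cos θ = θ)
    (h0 : x 0 ∈ Set.Ioc θ 1) (hx : ∀ n, x (n + 1) = Real.cos (x n)) :
    ∃ L, 0 < L ∧ Tendsto (fun n => (x n - θ) / (-Real.sin θ) ^ n) atTop (𝓝 L) := by
  have hpos := pos_of_cos_eq_self hθ
  have hlt := lt_one_of_cos_eq_self hθ
  have hmem : θ ∈ Set.Icc (0 : ℝ) 1 := ⟨hpos.le, hlt.le⟩
  have hxs : ∀ n, x n ∈ Set.Icc (0 : ℝ) 1 := fun n => by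
    induction n with
    | zero => exact ⟨(hpos.trans h0.1).le, h0.2⟩
    | succ n ih => exact hx n ▸ mapsTo_cos_Icc_zero_one ih
  have hsin : 0 < Real.sin θ := Real.sin_pos_of_pos_of_le_one hpos hlt.le
  have hlip : LipschitzOnWith (Real.sin 1).toNNReal Real.cos (Set.Icc 0 1) :=
    (lipschitzOnWith_cos_Icc Real.one_le_pi_div_two).mono (Set.Icc_subset_Icc_left (by norm_num))
  have hlim : Tendsto x atTop (𝓝 θ) :=
    tendsto_of_lipschitzOnWith_of_fixed hlip (Real.toNNReal_lt_one.mpr (Real.sin_lt one_pos))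
      hmem hθ hxs hx
  have hm1 : |deriv Real.cos θ| < 1 := by
    rw [Real.deriv_cos, abs_neg, abs_of_pos hsin]
    exact (Real.sin_lt hpos).trans hlt
  simpa only [Real.deriv_cos] using exists_pos_tendsto_sub_div_deriv_pow_of_strictAntiOn
    Real.analyticAt_cos strictAntiOn_cos_Icc_zero_one hmem hθ
    (by simpa only [Real.deriv_cos, neg_ne_zero] using hsin.ne') hm1 hxs hx h0.1 hlim

end Cosine

theorem stmt_14_general (θ : ℝ) (hθ : Real.cos θ = θ)
    (x : ℕ → ℝ) (h0 : θ < Real.cos (x 0))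
    (hrec : ∀ k, x (k + 1) = Real.cos (x k)) :
    (∃ L : ℝ, 0 < L ∧
      Tendsto (fun k : ℕ => (x (2*k+1) - θ) / (1 - θ^2)^k) atTop (𝓝 L)) ∧
    (∃ L : ℝ, 0 < L ∧
      Tendsto (fun k : ℕ => (θ - x (2*k)) / (1 - θ^2)^k) atTop (𝓝 L)) := by
  have hsin : 0 < Real.sin θ :=
    Real.sin_pos_of_pos_of_le_one (pos_of_cos_eq_self hθ) (lt_one_of_cos_eq_self hθ).le
  have hsq : 1 - θ ^ 2 = (-Real.sin θ) ^ 2 := by rw [neg_sq, Real.sin_sq, hθ]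
  -- `x 0` may lie anywhere on the line, but `x 1` lies in `(θ, 1]`, so the orbit starts there.
  obtain ⟨L, hL0, hL⟩ := exists_pos_tendsto_cos_orbit_sub_div_pow (x := fun n => x (n + 1)) hθ
    (by simpa only [hrec] using ⟨h0, Real.cos_le_one (x 0)⟩) fun n => hrec (n + 1)
  have heven : Tendsto (fun k : ℕ => 2 * k) atTop atTop :=
    tendsto_id.const_mul_atTop' two_pos
  simp only [hsq, ← pow_mul]
  refine ⟨⟨L, hL0, hL.comp heven⟩, L / Real.sin θ, div_pos hL0 hsin, ?_⟩
  refine (tendsto_add_atTop_iff_nat 1).mp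
    (((hL.comp ((tendsto_add_atTop_nat 1).comp heven)).div_const (Real.sin θ)).congr fun k => ?_)
  simp only [Function.comp_apply, mul_add, mul_one, pow_succ _ (2 * k + 1)]
  field_simp
  ring

theorem stmt_14 (θ : ℝ) (hθ : Real.cos θ = θ)
    (x : ℕ → ℝ) (h0 : x 0 = 0)
    (hrec : ∀ k, x (k + 1) = Real.cos (x k)) :
    (∃ L : ℝ, 0 < L ∧
      Tendsto (fun k : ℕ => (x (2*k+1) - θ) / (1 - θ^2)^k) atTop (𝓝 L)) ∧
    (∃ L : ℝ, 0 < L ∧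
      Tendsto (fun k : ℕ => (θ - x (2*k)) / (1 - θ^2)^k) atTop (𝓝 L)) :=
  stmt_14_general θ hθ x (by simpa only [h0, Real.cos_zero] using lt_one_of_cos_eq_self hθ) hrec
end

section
/- Let x : ℕ → ℝ be defined by x₀ = 1/2 and x_k = (5/2)·x_{k-1}·(1 - x_{k-1}) for k ≥ 1 (the logistic map with λ = 5/2, whose fixed point is μ = 3/5). Then lim_{k→∞} (x_{2k+1} - 3/5)/(3/5 - x_{2k}) = 1/2; that is, the limit of (x_{2k+1} - 3/5)/(1/2)^{2k} equals one half of the limit of (3/5 - x_{2k})/(1/2)^{2k}. -/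
open Filter Topology

/-!
The error `e k = x k - μ` of an orbit of the logistic map `z ↦ r z (1 - z)` about its fixed point
`μ = 1 - 1 / r` satisfies `e (k + 1) = (2 - r - r e k) e k`. If `‖2 - r‖ + ‖r‖ ‖e 0‖ < 1`, the
factor `2 - r - r e k` stays bounded by this number, so `e k` tends to `0` geometrically and the
factor, which is the ratio of consecutive errors, tends to the multiplier `2 - r`.
-/

/-- `e` is an orbit of the quadratic map `z ↦ c z + a z²`, the normal form of a quadratic map whose
fixed point with multiplier `c` has been moved to `0`. -/
def IsQuadraticOrbit {R : Type*} [Ring R] (c a : R) (e : ℕ → R) : Prop :=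
  ∀ k, e (k + 1) = (c + a * e k) * e k

namespace IsQuadraticOrbit

theorem of_logistic {R : Type*} [CommRing R] {r μ : R} {x : ℕ → R} (hμ : r * (1 - μ) = 1)
    (hx : ∀ k, x (k + 1) = r * x k * (1 - x k)) :
    IsQuadraticOrbit (2 - r) (-r) (fun k => x k - μ) := by
  intro k
  linear_combination hx k + (2 * x k - μ) * hμ

section SeminormedRing

variable {R : Type*} [SeminormedRing R] {c a : R} {e : ℕ → R}

theorem norm_succ_le (he : IsQuadraticOrbit c a e) (k : ℕ) :
    ‖e (k + 1)‖ ≤ (‖c‖ + ‖a‖ * ‖e k‖) * ‖e k‖ := by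
  rw [he k]
  exact norm_mul_le_of_le (norm_add_le_of_le le_rfl (norm_mul_le _ _)) le_rfl

theorem norm_le_norm_zero (he : IsQuadraticOrbit c a e) (h : ‖c‖ + ‖a‖ * ‖e 0‖ ≤ 1) (k : ℕ) :
    ‖e k‖ ≤ ‖e 0‖ := by
  induction k with
  | zero => rfl
  | succ k ih =>
    calc ‖e (k + 1)‖ ≤ (‖c‖ + ‖a‖ * ‖e k‖) * ‖e k‖ := he.norm_succ_le k
      _ ≤ (‖c‖ + ‖a‖ * ‖e 0‖) * ‖e 0‖ := by gcongr
      _ ≤ ‖e 0‖ := mul_le_of_le_one_left (norm_nonneg _) h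

theorem norm_le_pow_mul (he : IsQuadraticOrbit c a e) (h : ‖c‖ + ‖a‖ * ‖e 0‖ ≤ 1) (k : ℕ) :
    ‖e k‖ ≤ (‖c‖ + ‖a‖ * ‖e 0‖) ^ k * ‖e 0‖ := by
  induction k with
  | zero => simp
  | succ k ih =>
    calc ‖e (k + 1)‖ ≤ (‖c‖ + ‖a‖ * ‖e k‖) * ‖e k‖ := he.norm_succ_le k
      _ ≤ (‖c‖ + ‖a‖ * ‖e 0‖) * ((‖c‖ + ‖a‖ * ‖e 0‖) ^ k * ‖e 0‖) := by
        gcongr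
        exact he.norm_le_norm_zero h k
      _ = (‖c‖ + ‖a‖ * ‖e 0‖) ^ (k + 1) * ‖e 0‖ := by rw [pow_succ', mul_assoc]

theorem tendsto_zero (he : IsQuadraticOrbit c a e) (h : ‖c‖ + ‖a‖ * ‖e 0‖ < 1) :
    Tendsto e atTop (𝓝 0) := by
  refine squeeze_zero_norm (he.norm_le_pow_mul h.le) ?_
  simpa using (tendsto_pow_atTop_nhds_zero_of_lt_one (by positivity) h).mul_const ‖e 0‖

theorem ne_zero [NoZeroDivisors R] (he : IsQuadraticOrbit c a e)
    (h : ‖c‖ + ‖a‖ * ‖e 0‖ ≤ 1) (hc : ‖a‖ * ‖e 0‖ < ‖c‖) (h₀ : e 0 ≠ 0) (k : ℕ) : e k ≠ 0 := by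
  induction k with
  | zero => exact h₀
  | succ k ih =>
    have norm_lt : ‖a * e k‖ < ‖c‖ :=
      calc ‖a * e k‖ ≤ ‖a‖ * ‖e k‖ := norm_mul_le _ _
        _ ≤ ‖a‖ * ‖e 0‖ := mul_le_mul_of_nonneg_left (he.norm_le_norm_zero h k) (norm_nonneg a)
        _ < ‖c‖ := hc
    have factor_ne_zero : c + a * e k ≠ 0 := fun h' => by
      rw [eq_neg_of_add_eq_zero_left h', norm_neg] at norm_lt
      exact norm_lt.false
    rw [he k]
    exact mul_ne_zero factor_ne_zero ih

end SeminormedRing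

theorem tendsto_div {K : Type*} [NormedDivisionRing K] {c a : K} {e : ℕ → K}
    (he : IsQuadraticOrbit c a e) (hlim : Tendsto e atTop (𝓝 0)) (hne : ∀ k, e k ≠ 0) :
    Tendsto (fun k => e (k + 1) / e k) atTop (𝓝 c) := by
  have tendsto_factor : Tendsto (fun k => c + a * e k) atTop (𝓝 c) := by
    simpa using (hlim.const_mul a).const_add c
  refine tendsto_factor.congr fun k => ?_
  rw [he k, mul_div_cancel_right₀ _ (hne k)]

end IsQuadraticOrbit

theorem logistic_ne_fixedPoint {K : Type*} [NormedField K] {r μ : K} {x : ℕ → K}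
    (hμ : r * (1 - μ) = 1) (hx : ∀ k, x (k + 1) = r * x k * (1 - x k))
    (h : ‖2 - r‖ + ‖r‖ * ‖x 0 - μ‖ ≤ 1) (hr : ‖r‖ * ‖x 0 - μ‖ < ‖2 - r‖) (h₀ : x 0 ≠ μ) (k : ℕ) :
    x k ≠ μ :=
  sub_ne_zero.mp <| (IsQuadraticOrbit.of_logistic hμ hx).ne_zero
    (by simpa only [norm_neg] using h) (by simpa only [norm_neg] using hr) (sub_ne_zero.mpr h₀) k

theorem stmt_19_general {K : Type*} [NormedField K] {r μ : K} {x : ℕ → K}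
    (hμ : r * (1 - μ) = 1) (hx : ∀ k, x (k + 1) = r * x k * (1 - x k))
    (h : ‖2 - r‖ + ‖r‖ * ‖x 0 - μ‖ < 1) (hne : ∀ k, x k ≠ μ) :
    Tendsto (fun k => (x (k + 1) - μ) / (μ - x k)) atTop (𝓝 (r - 2)) := by
  have he := IsQuadraticOrbit.of_logistic hμ hx
  have hlim := he.tendsto_zero (by simpa only [norm_neg] using h)
  simpa only [← div_neg, neg_sub] using
    (he.tendsto_div hlim fun k => sub_ne_zero.mpr (hne k)).neg

theorem stmt_19 (x : ℕ → ℝ) (h0 : x 0 = 1/2)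
    (hrec : ∀ k, x (k + 1) = (5/2) * x k * (1 - x k)) :
    Tendsto (fun k : ℕ => (x (2*k+1) - 3/5) / (3/5 - x (2*k))) atTop
      (𝓝 (1/2)) := by
  have hμ : (5 / 2 : ℝ) * (1 - 3 / 5) = 1 := by norm_num
  have hlim := stmt_19_general hμ hrec (by norm_num [h0])
    (logistic_ne_fixedPoint hμ hrec (by norm_num [h0]) (by norm_num [h0]) (by norm_num [h0]))
  rw [show (5 / 2 - 2 : ℝ) = 1 / 2 by norm_num] at hlim
  exact hlim.comp (strictMono_mul_left_of_pos two_pos).tendsto_atTop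
end
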